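/- Let X be a geodesic metric space that is δ-hyperbolic (four-point condition) for some δ ≥ 0, let a group G act on X by isometries, and let x ∈ X. If the orbit G·x is unbounded (i.e. sup_{g ∈ G} d(g·x, x) = ∞), then the boundary of X is nonempty in the following sense: there exists a sequence of elements g_i ∈ G such that the sequence {g_i·x} tends to infinity, i.e. lim_{i,j→∞, i≠j} (g_i·x, g_j·x)_x = ∞. -/

import Mathlib

/-! Write `|g| = d(g x, x)` and `2 c(a, b) = |a| + |b| - |ab|`.

If some `u` satisfies `|u²| > |u| + 2δ`, hyperbolicity makes `|uⁿ|` grow by at least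
`|u²| - |u| - 2δ` at each step, and the powers of `u` tend to infinity.

Otherwise `2 c(u, u) ≥ |u| - 2δ` for every `u`. If `(g x, h x)_x` were much smaller than `|g|` and
`|h|`, then `c(g, h)`, `c(h, g)` and hence `c(gh, gh)` would be small too, so `|(gh)²|` would exceed
`|gh|` by far. Hence `(g x, h x)_x` is bounded below by `min(|g|, |h|) / 2` up to a multiple of `δ`,
and any sequence `gₙ` with `|gₙ| → ∞` tends to infinity. -/

open Filter

section GromovProduct

variable {X : Type*} [PseudoMetricSpace X]

/-- The Gromov product `(x, y)_z`; the basepoint `z` is the last argument. -/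
noncomputable def gromovProduct (x y z : X) : ℝ :=
  (dist x z + dist y z - dist x y) / 2

theorem gromovProduct_comm (x y z : X) : gromovProduct x y z = gromovProduct y x z := by
  rw [gromovProduct, gromovProduct, dist_comm x y, add_comm (dist x z)]

theorem gromovProduct_add_gromovProduct (x y z : X) :
    gromovProduct x y z + gromovProduct x z y = dist y z := by
  rw [gromovProduct, gromovProduct, dist_comm z y]
  ring

/-- Convergence of a sequence to infinity in the sense of Gromov, the notion from which boundary
points are built. The diagonal terms `i = j` are included, so `d(uᵢ, x) → ∞` is part of it. -/
def TendsToInfinity (u : ℕ → X) (x : X) : Prop :=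
  Tendsto (fun p : ℕ × ℕ ↦ gromovProduct (u p.1) (u p.2) x) atTop atTop

theorem TendsToInfinity.exists_forall_le {u : ℕ → X} {x : X} (hu : TendsToInfinity u x) (M : ℝ) :
    ∃ N, ∀ i j, N ≤ i → N ≤ j → M ≤ gromovProduct (u i) (u j) x :=
  eventually_atTop_prod_self.1 (tendsto_atTop.1 hu M)

theorem tendsToInfinity_of_min_dist_le {u : ℕ → X} {x : X} {K : ℝ}
    (hu : Tendsto (fun n ↦ dist (u n) x) atTop atTop)
    (hK : ∀ i j, min (dist (u i) x) (dist (u j) x) ≤ 2 * gromovProduct (u i) (u j) x + K) :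
    TendsToInfinity u x := by
  refine tendsto_atTop.2 fun M ↦ eventually_atTop_prod_self.2 ?_
  obtain ⟨N, hN⟩ := eventually_atTop.1 (tendsto_atTop.1 hu (2 * M + K))
  refine ⟨N, fun i j hi hj ↦ ?_⟩
  linarith [le_min (hN i hi) (hN j hj), hK i j]

/-- Gromov `δ`-hyperbolicity, in the four-point formulation. -/
def IsGromovHyperbolic (X : Type*) [PseudoMetricSpace X] (δ : ℝ) : Prop :=
  ∀ p₁ p₂ p₃ p₄ : X,
    dist p₁ p₄ + dist p₂ p₃ ≤
      max (dist p₁ p₂ + dist p₃ p₄) (dist p₁ p₃ + dist p₂ p₄) + 2 * δ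

namespace IsGromovHyperbolic

variable {δ : ℝ}

theorem nonneg [Nonempty X] (hX : IsGromovHyperbolic X δ) : 0 ≤ δ := by
  obtain ⟨x⟩ := ‹Nonempty X›
  simpa using hX x x x x

theorem min_gromovProduct_le (hX : IsGromovHyperbolic X δ) (x y z w : X) :
    min (gromovProduct x y w) (gromovProduct y z w) ≤ gromovProduct x z w + δ := by
  have four_point := hX x y w z
  rw [dist_comm w z] at four_point
  simp only [gromovProduct, min_le_iff]
  rcases le_max_iff.1 (sub_le_iff_le_add.2 four_point) with h | h
  · left; linarith
  · right; linarith

end IsGromovHyperbolic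

end GromovProduct

section Action

variable {X G : Type*} [PseudoMetricSpace X] [Monoid G] [MulAction G X]

/-- The length cancelled in the product `a * b`, measured by the displacement of `x`. When `a` is
invertible it is the Gromov product `(a⁻¹x, bx)_x`; placing the basepoint at `a • x` instead makes
sense in any monoid. -/
noncomputable def cancellation (a b : G) (x : X) : ℝ :=
  gromovProduct x ((a * b) • x) (a • x)

theorem gromovProduct_mul_smul_smul (a b : G) (x : X) :
    gromovProduct ((a * b) • x) (a • x) x = dist (a • x) x - cancellation a b x := by
  rw [cancellation, gromovProduct_comm x, eq_sub_iff_add_eq]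
  exact gromovProduct_add_gromovProduct _ _ _

variable [IsIsometricSMul G X]

theorem dist_pow_add_smul (u : G) (x : X) (n k : ℕ) :
    dist (u ^ (n + k) • x) (u ^ n • x) = dist (u ^ k • x) x := by
  rw [pow_add, mul_smul, dist_smul]

theorem gromovProduct_smul (g : G) (x y z : X) :
    gromovProduct (g • x) (g • y) (g • z) = gromovProduct x y z := by
  simp only [gromovProduct, dist_smul]

theorem two_mul_cancellation (a b : G) (x : X) :
    2 * cancellation a b x = dist (a • x) x + dist (b • x) x - dist ((a * b) • x) x := by
  rw [cancellation, gromovProduct, mul_smul, dist_smul, dist_comm x (a • x),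
    dist_comm x (a • b • x)]
  ring

theorem gromovProduct_smul_self_mul_smul (a b : G) (x : X) :
    gromovProduct (a • x) x ((a * b) • x) = dist (b • x) x - cancellation a b x := by
  rw [cancellation, gromovProduct_comm (a • x), eq_sub_iff_add_eq,
    ← dist_smul a (b • x) x, ← mul_smul, dist_comm]
  exact gromovProduct_add_gromovProduct _ _ _

namespace IsGromovHyperbolic

variable {δ : ℝ}

theorem min_cancellation_le_gromovProduct (hX : IsGromovHyperbolic X δ) (a b c : G) (x : X) :
    min (cancellation a b x) (cancellation a c x) ≤ gromovProduct (b • x) (c • x) x + δ := by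
  have h := hX.min_gromovProduct_le ((a * b) • x) x ((a * c) • x) (a • x)
  rwa [gromovProduct_comm _ x, mul_smul, mul_smul, gromovProduct_smul, ← mul_smul,
    ← mul_smul] at h

theorem min_cancellation_gromovProduct_le (hX : IsGromovHyperbolic X δ) (a b c : G) (x : X) :
    min (cancellation a b x) (gromovProduct (b • x) (c • x) x) ≤ cancellation a c x + δ := by
  have h := hX.min_gromovProduct_le x ((a * b) • x) ((a * c) • x) (a • x)
  rwa [mul_smul, mul_smul, gromovProduct_smul, ← mul_smul, ← mul_smul] at h

theorem min_cancellation_mul_le (hX : IsGromovHyperbolic X δ) (a b c : G) (x : X) :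
    min (dist (b • x) x - cancellation a b x) (cancellation (a * b) c x) ≤
      cancellation b c x + δ := by
  have h := hX.min_gromovProduct_le (a • x) x ((a * b * c) • x) ((a * b) • x)
  have translate : gromovProduct (a • x) ((a * b * c) • x) ((a * b) • x) = cancellation b c x := by
    rw [cancellation, mul_assoc, mul_smul a, mul_smul a, gromovProduct_smul]
  rwa [gromovProduct_smul_self_mul_smul, translate] at h

theorem min_dist_smul_le_gromovProduct (hX : IsGromovHyperbolic X δ) {x : X}
    (hsq : ∀ u : G, dist (u ^ 2 • x) x ≤ dist (u • x) x + 2 * δ) (g h : G) :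
    min (dist (g • x) x) (dist (h • x) x) ≤ 2 * gromovProduct (g • x) (h • x) x + 5 * δ := by
  by_contra! hlt
  obtain ⟨hg, hh⟩ := lt_min_iff.1 hlt
  have : Nonempty X := ⟨x⟩
  have hδ := hX.nonneg
  have le_cancellation_self (u : G) : dist (u • x) x ≤ 2 * cancellation u u x + 2 * δ := by
    rw [two_mul_cancellation, ← sq]
    linarith [hsq u]
  set p := gromovProduct (g • x) (h • x) x
  have cancel_gh : cancellation g h x ≤ p + δ := by
    have := hX.min_cancellation_le_gromovProduct g g h x
    exact (min_le_iff.1 this).resolve_left (by linarith [le_cancellation_self g])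
  have cancel_hg : cancellation h g x ≤ p + δ := by
    have := hX.min_cancellation_le_gromovProduct h g h x
    exact (min_le_iff.1 this).resolve_right (by linarith [le_cancellation_self h])
  have cancel_gh_g : cancellation (g * h) g x ≤ p + 2 * δ := by
    have := (min_le_iff.1 (hX.min_cancellation_mul_le g h g x)).resolve_left (by linarith)
    linarith
  have cancel_gh_gh : cancellation (g * h) (g * h) x ≤ p + 3 * δ := by
    have := hX.min_cancellation_gromovProduct_le (g * h) (g * h) g x
    rw [gromovProduct_mul_smul_smul] at this
    have := (min_le_iff.1 this).resolve_right (by linarith)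
    linarith
  linarith [le_cancellation_self (g * h), two_mul_cancellation g h x]

theorem dist_sq_smul_add_dist_pow_smul_le (hX : IsGromovHyperbolic X δ) (u : G) (x : X) (n : ℕ) :
    dist (u ^ 2 • x) x + dist (u ^ (n + 1) • x) x ≤
      max (dist (u ^ n • x) x) (dist (u ^ (n + 2) • x) x) + dist (u • x) x + 2 * δ := by
  have four_point := hX (u ^ 2 • x) (u ^ (n + 2) • x) (u • x) x
  have dist_sq_right : dist (u ^ 2 • x) (u ^ (n + 2) • x) = dist (u ^ n • x) x := by
    rw [dist_comm, add_comm, dist_pow_add_smul]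
  have dist_self_right (k : ℕ) : dist (u ^ (k + 1) • x) (u • x) = dist (u ^ k • x) x := by
    simpa only [pow_one, add_comm 1 k] using dist_pow_add_smul u x 1 k
  have dist_sq_self : dist (u ^ 2 • x) (u • x) = dist (u • x) x := by
    simpa only [pow_one] using dist_self_right 1
  rwa [dist_sq_right, dist_self_right (n + 1), dist_sq_self, add_comm (dist (u • x) x),
    max_add_add_right] at four_point

theorem dist_pow_smul_add_le (hX : IsGromovHyperbolic X δ) {u : G} {x : X}
    (hu : dist (u • x) x + 2 * δ < dist (u ^ 2 • x) x) (n : ℕ) :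
    dist (u ^ n • x) x + (dist (u ^ 2 • x) x - dist (u • x) x - 2 * δ) ≤
      dist (u ^ (n + 1) • x) x := by
  induction n with
  | zero =>
    have : Nonempty X := ⟨x⟩
    have dist_sq_le : dist (u ^ 2 • x) x ≤ dist (u • x) x + dist (u • x) x := by
      rw [sq, mul_smul]
      simpa only [dist_smul] using dist_triangle (u • u • x) (u • x) x
    simp only [pow_zero, one_smul, dist_self, zero_add, pow_one]
    linarith [hX.nonneg]
  | succ n ih =>
    rcases max_cases (dist (u ^ n • x) x) (dist (u ^ (n + 2) • x) x) with h | h <;>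
      linarith [hX.dist_sq_smul_add_dist_pow_smul_le u x n]

theorem tendsToInfinity_pow_smul (hX : IsGromovHyperbolic X δ) {u : G} {x : X}
    (hu : dist (u • x) x + 2 * δ < dist (u ^ 2 • x) x) :
    TendsToInfinity (fun n ↦ u ^ n • x) x := by
  let c := dist (u ^ 2 • x) x - dist (u • x) x - 2 * δ
  have c_pos : 0 < c := by simp only [c]; linarith
  have step (n : ℕ) : dist (u ^ n • x) x + c ≤ dist (u ^ (n + 1) • x) x :=
    hX.dist_pow_smul_add_le hu n
  have linear_growth (n : ℕ) : n * c ≤ dist (u ^ n • x) x := by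
    induction n with
    | zero => simp
    | succ n ih => push_cast; linarith [step n]
  have mono : Monotone fun n ↦ dist (u ^ n • x) x :=
    monotone_nat_of_le_succ fun n ↦ by linarith [step n]
  refine tendsToInfinity_of_min_dist_le (K := 0) (tendsto_atTop_mono linear_growth
    (tendsto_natCast_atTop_atTop.atTop_mul_const c_pos)) fun i j ↦ ?_
  wlog hij : i ≤ j generalizing i j
  · rw [min_comm, gromovProduct_comm]
    exact this j i (le_of_not_ge hij)
  obtain ⟨k, rfl⟩ := Nat.exists_eq_add_of_le hij
  have dist_le : dist (u ^ k • x) x ≤ dist (u ^ (i + k) • x) x := mono (Nat.le_add_left k i)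
  rw [min_eq_left (mono hij), gromovProduct, dist_comm (u ^ i • x) (u ^ (i + k) • x),
    dist_pow_add_smul]
  linarith

end IsGromovHyperbolic

theorem unbounded_orbit_gives_boundary_point_general {δ : ℝ} (hX : IsGromovHyperbolic X δ) (x : X)
    (hunb : ∀ M : ℝ, ∃ g : G, M < dist (g • x) x) :
    ∃ g : ℕ → G, TendsToInfinity (fun n ↦ g n • x) x := by
  by_cases hu : ∃ u : G, dist (u • x) x + 2 * δ < dist (u ^ 2 • x) x
  · obtain ⟨u, hu⟩ := hu
    exact ⟨fun n ↦ u ^ n, hX.tendsToInfinity_pow_smul hu⟩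
  · push Not at hu
    choose g hg using fun n : ℕ ↦ hunb n
    have dist_tendsto : Tendsto (fun n ↦ dist (g n • x) x) atTop atTop :=
      tendsto_atTop_mono (fun n ↦ (hg n).le) tendsto_natCast_atTop_atTop
    exact ⟨g, tendsToInfinity_of_min_dist_le dist_tendsto
      fun i j ↦ hX.min_dist_smul_le_gromovProduct hu (g i) (g j)⟩

end Action

/-- The action on `X` given by a homomorphism to its isometry group, which turns `ρ g x` into
`g • x`. -/
abbrev mulActionOfIsometries {X G : Type*} [PseudoEMetricSpace X] [Monoid G]
    (ρ : G →* (X ≃ᵢ X)) : MulAction G X where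
  smul g := ρ g
  one_smul x := congrArg (· x) (map_one ρ)
  mul_smul a b x := congrArg (· x) (map_mul ρ a b)

theorem isIsometricSMul_mulActionOfIsometries {X G : Type*} [PseudoEMetricSpace X] [Monoid G]
    (ρ : G →* (X ≃ᵢ X)) : letI := mulActionOfIsometries ρ; IsIsometricSMul G X :=
  letI := mulActionOfIsometries ρ
  ⟨fun g ↦ (ρ g).isometry⟩

/-- Let a group `G` act by isometries on a geodesic δ-hyperbolic space `X`
with an unbounded orbit `G·x`. Then there is a sequence `gᵢ ∈ G` such that `{gᵢ·x}` tends to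
infinity: the Gromov products `(gᵢ·x, gⱼ·x)_x` tend to infinity as `i, j → ∞` with `i ≠ j`. -/
theorem unbounded_orbit_gives_boundary_point
    (X : Type*) [MetricSpace X]
    -- `X` is geodesic
    (hgeo : ∀ a b : X, ∃ f : ℝ → X, f 0 = a ∧ f (dist a b) = b ∧
      ∀ s ∈ Set.Icc (0 : ℝ) (dist a b), ∀ u ∈ Set.Icc (0 : ℝ) (dist a b),
        dist (f s) (f u) = |s - u|)
    -- `X` is δ-hyperbolic (four-point condition)
    (δ : ℝ) (hδ : 0 ≤ δ)
    (hhyp : ∀ p₁ p₂ p₃ p₄ : X,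
      dist p₁ p₄ + dist p₂ p₃ ≤
        max (dist p₁ p₂ + dist p₃ p₄) (dist p₁ p₃ + dist p₂ p₄) + 2 * δ)
    (G : Type*) [Group G] (ρ : G →* (X ≃ᵢ X))
    (x : X)
    -- the orbit `G·x` is unbounded
    (hunb : ∀ M : ℝ, ∃ g : G, M < dist (ρ g x) x) :
    ∃ g : ℕ → G, ∀ M : ℝ, ∃ N : ℕ, ∀ i j : ℕ, N ≤ i → N ≤ j → i ≠ j →
      M ≤ (dist (ρ (g i) x) x + dist (ρ (g j) x) x - dist (ρ (g i) x) (ρ (g j) x)) / 2 := by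
  let := mulActionOfIsometries ρ
  have := isIsometricSMul_mulActionOfIsometries ρ
  obtain ⟨g, hg⟩ := unbounded_orbit_gives_boundary_point_general hhyp x hunb
  exact ⟨g, fun M ↦ (hg.exists_forall_le M).imp fun _ hN i j hi hj _ ↦ hN i j hi hj⟩
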